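/- Let Σ = {a,b}, let L ⊆ Σ* be a regular language, and let x_n denote the n-th word over {a,b} in shortlex order. Then the language M = {(n)_2 : n ≥ 0 and x_n ∈ L} of canonical base-2 representations of those indices n with x_n ∈ L is a regular language over the alphabet {0,1}. -/

import Mathlib

/-- `word n` is the `n`-th word over the two-letter alphabet `{a, b}` in shortlex
(dictionary) order, encoding `a` as `false` and `b` as `true`:
`word 0 = Λ`, `word (2n+1) = word n ++ [a]`, `word (2n+2) = word n ++ [b]`. -/
def word : ℕ → List Bool
  | 0 => []
  | n + 1 => word (n / 2) ++ [decide (n % 2 = 1)]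
decreasing_by exact Nat.lt_succ_of_le (Nat.div_le_self n 2)

/-- A language `L ⊆ Σ*` is regular if it is accepted by a deterministic finite
automaton, i.e. by a finite set of states with a transition function, an initial
state, and a set of accepting states. -/
def IsRegularLanguage {α : Type} (L : Set (List α)) : Prop :=
  ∃ (Q : Type) (_ : Fintype Q) (step : Q → α → Q) (start : Q) (accept : Set Q),
    L = {w | w.foldl step start ∈ accept}

/-- `rep n` is the canonical base-2 representation `(n)_2` of `n` as a word over
`{0, 1}` (encoded as `Bool`, `0 = false`, `1 = true`), most significant digit
first, with no leading zeros; `rep 0` is the empty word. -/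
def rep (n : ℕ) : List Bool := (Nat.bits n).reverse

/-!
Since `x_n` is the `n`-th word in shortlex order, `(n + 1)_2 = 1 x_n`, with `a` and `b` read as `0`
and `1`. Membership of `x_n` in `L` is read off `(n + 1)_2` by an automaton that skips the first
digit. An automaton reading `(n)_2` can simulate this one by tracking its states on `(n)_2` and on
`(n + 1)_2`: for a bit `b`, the representations of `2n + b` and `2n + b + 1` arise from those of `n`
and `n + 1` by appending one digit.
-/

theorem isRegularLanguage_iff_isRegular {α : Type} {L : Set (List α)} :
    IsRegularLanguage L ↔ Language.IsRegular (L : Language α) := by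
  constructor
  · rintro ⟨Q, hQ, step, start, accept, rfl⟩
    exact ⟨Q, hQ, ⟨step, start, accept⟩, rfl⟩
  · rintro ⟨Q, hQ, M, rfl⟩
    exact ⟨Q, hQ, M.step, M.start, M.accept, rfl⟩

theorem isRegular_setOf_tail_mem {α : Type*} {L : Language α} (hL : L.IsRegular) :
    Language.IsRegular ({w | w.tail ∈ L} : Language α) := by
  refine .of_finite_range_leftQuotient
    ((hL.finite_range_leftQuotient.insert {w | w.tail ∈ L}).subset ?_)
  rintro _ ⟨_ | ⟨_, w⟩, rfl⟩
  · exact Set.mem_insert _ _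
  · exact Set.mem_insert_of_mem _ ⟨w, rfl⟩

theorem isRegular_setOf_head?_mem {α : Type*} (s : Set (Option α)) :
    Language.IsRegular ({w | w.head? ∈ s} : Language α) := by
  refine .of_finite_range_leftQuotient ((Set.toFinite {{w | w.head? ∈ s}, ⊤, ⊥}).subset ?_)
  rintro _ ⟨_ | ⟨a, w⟩, rfl⟩
  · exact Set.mem_insert _ _
  · by_cases ha : some a ∈ s
    · exact .inr (.inl (Language.ext fun _ => iff_true_intro ha))
    · exact .inr (.inr (Language.ext fun _ => iff_false_intro ha))

theorem rep_zero : rep 0 = [] := by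
  simp only [rep, Nat.zero_bits, List.reverse_nil]

theorem rep_bit {b : Bool} {n : ℕ} (h : n = 0 → b = true) : rep (n.bit b) = rep n ++ [b] := by
  rw [rep, Nat.bits_append_bit n b h, List.reverse_cons, rep]

theorem rep_succ (n : ℕ) : rep (n + 1) = true :: word n := by
  induction n using Nat.strong_induction_on with
  | _ n ih =>
    cases n with
    | zero => simp [rep, word]
    | succ n =>
      have bit_eq : n + 1 + 1 = (n / 2 + 1).bit (decide (n % 2 = 1)) := by
        simp only [Nat.bit_val, Bool.toNat, Bool.cond_decide]
        split_ifs <;> omega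
      rw [bit_eq, rep_bit (by simp), ih (n / 2) (by omega), word, List.cons_append]

theorem rep_injective : Function.Injective rep := by
  intro m n h
  apply Nat.digits.injective 2
  rw [Nat.digits_two_eq_bits, Nat.digits_two_eq_bits, List.reverse_injective h]

theorem mem_range_rep {w : List Bool} : w ∈ Set.range rep ↔ w.head? ≠ some false := by
  constructor
  · rintro ⟨_ | n, rfl⟩
    · simp [rep_zero]
    · simp [rep_succ]
  · induction w using List.reverseRecOn with
    | nil => exact fun _ => ⟨0, rep_zero⟩
    | append_singleton w b ih =>
      intro hw
      obtain ⟨n, rfl⟩ := ih fun h => hw (by simp [h])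
      refine ⟨n.bit b, rep_bit ?_⟩
      rintro rfl
      simpa [rep_zero] using hw

/-- A set of natural numbers is `2`-recognizable if the canonical binary representations of its
elements form a regular language. -/
def IsTwoRecognizable (S : Set ℕ) : Prop :=
  Language.IsRegular (rep '' S : Language Bool)

theorem isTwoRecognizable_iff {S : Set ℕ} :
    IsTwoRecognizable S ↔ ∃ K : Language Bool, K.IsRegular ∧ {n | rep n ∈ K} = S := by
  constructor
  · exact fun hS => ⟨_, hS, rep_injective.preimage_image S⟩
  · rintro ⟨K, hK, rfl⟩
    have image_eq : (rep '' {n | rep n ∈ K} : Language Bool) =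
        K ⊓ {w | w.head? ∈ ({some false}ᶜ : Set (Option Bool))} := by
      ext w
      constructor
      · rintro ⟨n, hn, rfl⟩
        exact ⟨hn, mem_range_rep.1 ⟨n, rfl⟩⟩
      · rintro ⟨hw, hhead⟩
        obtain ⟨n, rfl⟩ := mem_range_rep.2 hhead
        exact ⟨n, hw, rfl⟩
    rw [IsTwoRecognizable, image_eq]
    exact hK.inf (isRegular_setOf_head?_mem _)

/-- The automaton that runs `M` on `rep n` and on `rep (n + 1)` in parallel while reading `rep n`,
and accepts if `M` accepts `rep (n + 1)`. The second component starts after the digit `1` because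
`rep 0 = []` and `rep 1 = [true]`; words with leading zeros are not treated specially. -/
def succDFA {σ : Type*} (M : DFA Bool σ) : DFA Bool (σ × σ) where
  step s b := (M.step s.1 b, if b then M.step s.2 false else M.step s.1 true)
  start := (M.start, M.step M.start true)
  accept := {s | s.2 ∈ M.accept}

theorem eval_succDFA_rep {σ : Type*} (M : DFA Bool σ) (n : ℕ) :
    (succDFA M).eval (rep n) = (M.eval (rep n), M.eval (rep (n + 1))) := by
  induction n using Nat.binaryRec' with
  | zero => simp [rep_zero, rep_succ, word, succDFA]
  | bit b n hb ih =>
    have eval_succ : M.eval (rep (n.bit b + 1)) =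
        if b then M.step (M.eval (rep (n + 1))) false else M.step (M.eval (rep n)) true := by
      cases b with
      | false =>
        have bit_eq : n.bit false + 1 = n.bit true := rfl
        rw [bit_eq, rep_bit (by simp), DFA.eval_append_singleton]
        rfl
      | true =>
        have bit_eq : n.bit true + 1 = (n + 1).bit false := by grind [Nat.bit_val]
        rw [bit_eq, rep_bit (by simp), DFA.eval_append_singleton]
        rfl
    rw [rep_bit hb, DFA.eval_append_singleton, ih, eval_succ, DFA.eval_append_singleton, succDFA]

theorem rep_mem_accepts_succDFA {σ : Type*} (M : DFA Bool σ) {n : ℕ} :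
    rep n ∈ (succDFA M).accepts ↔ rep (n + 1) ∈ M.accepts := by
  rw [DFA.mem_accepts, DFA.mem_accepts, eval_succDFA_rep]
  rfl

theorem IsTwoRecognizable.preimage_succ {S : Set ℕ} (hS : IsTwoRecognizable S) :
    IsTwoRecognizable (Nat.succ ⁻¹' S) := by
  obtain ⟨_, ⟨σ, _, M, rfl⟩, rfl⟩ := isTwoRecognizable_iff.1 hS
  refine isTwoRecognizable_iff.2 ⟨_, ⟨σ × σ, inferInstance, succDFA M, rfl⟩, ?_⟩
  ext n
  exact rep_mem_accepts_succDFA M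

theorem isTwoRecognizable_setOf_word_mem {L : Language Bool} (hL : L.IsRegular) :
    IsTwoRecognizable {n | word n ∈ L} := by
  have preimage_eq : {n | word n ∈ L} = Nat.succ ⁻¹' {n | (rep n).tail ∈ L} := by
    ext n
    simp only [Set.mem_preimage, Set.mem_ofPred_eq, Nat.succ_eq_add_one, rep_succ, List.tail_cons]
  rw [preimage_eq]
  exact (isTwoRecognizable_iff.2 ⟨_, isRegular_setOf_tail_mem hL, rfl⟩).preimage_succ

/-- If `L ⊆ {a,b}*` is regular, then the language
`M = {(n)_2 : n ≥ 0, x_n ∈ L}` of canonical base-2 representations of the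
indices `n` with `x_n ∈ L` is a regular language over `{0, 1}`. -/
theorem isRegularLanguage_rep_mem (L : Set (List Bool)) (hL : IsRegularLanguage L) :
    IsRegularLanguage {w : List Bool | ∃ n : ℕ, w = rep n ∧ word n ∈ L} := by
  have image_eq : {w | ∃ n, w = rep n ∧ word n ∈ L} = rep '' {n | word n ∈ L} := by
    ext w
    simp only [Set.mem_ofPred_eq, Set.mem_image, and_comm, eq_comm]
  rw [image_eq, isRegularLanguage_iff_isRegular]
  exact isTwoRecognizable_setOf_word_mem (isRegularLanguage_iff_isRegular.1 hL)
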